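/- Let A be a Timed Büchi Automaton and let (q,S)→^t(q',S') be a transition in the simulation graph SG(A) such that both S and S' are unions of regions. Then for every region r'⊆S' there is a region r⊆S such that (q,r)→^t(q',r') is a transition in the region graph RG(A). -/

import Mathlib

/-!
The region `r'` is the class of some `w ∈ S'`. Since `S'` is the region closure of the set of
successors of `S`, `w` is region equivalent to a genuine successor `v₀` of some `v ∈ S`. The class
`r` of `v` lies inside `S` because `S` is a union of regions, and `v₀ ∈ r'` because region
equivalence is symmetric, so the concrete step from `v` to `v₀` witnesses `r → r'`.
-/

/-! ## Framework for Timed Büchi Automata -/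

/-- Comparison operators `<, ≤, =, ≥, >` used in clock constraints. -/
inductive CmpOp where
  | lt | le | eq | ge | gt

def CmpOp.sat : CmpOp → ℝ → ℝ → Prop
  | .lt, a, b => a < b
  | .le, a, b => a ≤ b
  | .eq, a, b => a = b
  | .ge, a, b => a ≥ b
  | .gt, a, b => a > b

/-- A clock valuation assigns a non-negative real to every clock. -/
abbrev ClockVal (X : Type) := X → NNReal

/-- An atomic clock constraint `x # c`. -/
structure AtomicConstraint (X : Type) where
  clock : X
  cmp : CmpOp
  bound : ℕ

/-- A guard is a finite conjunction of atomic constraints. -/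
abbrev Guard (X : Type) := List (AtomicConstraint X)

def Guard.sat {X : Type} (g : Guard X) (v : ClockVal X) : Prop :=
  ∀ c ∈ g, CmpOp.sat c.cmp (v c.clock : ℝ) (c.bound : ℝ)

/-- A transition `(q, g, R, q')` of a timed automaton. -/
structure TBATrans (Q X : Type) where
  src : Q
  guard : Guard X
  reset : Set X
  dst : Q

/-- A Timed Büchi Automaton with states `Q` and clocks `X`. -/
structure TBA (Q X : Type) where
  q0 : Q
  trans : Set (TBATrans Q X)
  acc : Set Q

/-- Time elapse: `(ν+δ)(x) = ν(x)+δ`. -/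
def ClockVal.add {X : Type} (v : ClockVal X) (d : NNReal) : ClockVal X := fun x => v x + d

open Classical in
/-- `[R]ν` sets clocks in `R` to `0` and leaves others unchanged. -/
noncomputable def resetVal {X : Type} (R : Set X) (v : ClockVal X) : ClockVal X :=
  fun x => if x ∈ R then 0 else v x

/-- The valuation assigning `0` to every clock. -/
def zeroVal (X : Type) : ClockVal X := fun _ => 0

/-- `(q,ν) →^{δ,t} (q',ν')`. -/
def TBA.Step {Q X : Type} (A : TBA Q X) (t : TBATrans Q X) (d : NNReal)
    (c c' : Q × ClockVal X) : Prop :=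
  t ∈ A.trans ∧ t.src = c.1 ∧ t.dst = c'.1 ∧
    Guard.sat t.guard (ClockVal.add c.2 d) ∧ c'.2 = resetVal t.reset (ClockVal.add c.2 d)

/-- A run of `A` given by its configurations, delays and transitions. -/
def IsRun {Q X : Type} (A : TBA Q X) (st : ℕ → Q × ClockVal X) (ds : ℕ → NNReal)
    (ts : ℕ → TBATrans Q X) : Prop :=
  st 0 = (A.q0, zeroVal X) ∧ ∀ i, A.Step (ts i) (ds i) (st i) (st (i + 1))

/-- The run visits accepting states infinitely often. -/
def BuchiRun {Q X : Type} (A : TBA Q X) (st : ℕ → Q × ClockVal X) : Prop :=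
  {i | (st i).1 ∈ A.acc}.Infinite

/-- A sequence of delays is non-Zeno when its total duration is infinite. -/
def NonZeno (ds : ℕ → NNReal) : Prop := (∑' i, (ds i : ENNReal)) = ⊤

def TBA.BoundsConsts {Q X : Type} (A : TBA Q X) (M : ℕ) : Prop :=
  ∀ t ∈ A.trans, ∀ c ∈ t.guard, c.bound ≤ M

/-- `M` is the maximal constant appearing in the guards of `A`
(`M = 0` when there is no constraint at all). -/
def TBA.IsMaxConst {Q X : Type} (A : TBA Q X) (M : ℕ) : Prop :=
  A.BoundsConsts M ∧ (M = 0 ∨ ∃ t ∈ A.trans, ∃ c ∈ t.guard, c.bound = M)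

/-! ## Regions -/

/-- Region equivalence `ν ≅_M ν'`. -/
def RegEquiv {X : Type} (M : ℕ) (v v' : ClockVal X) : Prop :=
  ∀ x y : X,
    (((M : ℝ) < (v x : ℝ)) ↔ ((M : ℝ) < (v' x : ℝ))) ∧
    ((v x : ℝ) ≤ M → ⌊(v x : ℝ)⌋ = ⌊(v' x : ℝ)⌋) ∧
    ((v x : ℝ) ≤ M → (Int.fract (v x : ℝ) = 0 ↔ Int.fract (v' x : ℝ) = 0)) ∧
    ((v x : ℝ) ≤ M → (v y : ℝ) ≤ M →
      (Int.fract (v x : ℝ) ≤ Int.fract (v y : ℝ) ↔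
        Int.fract (v' x : ℝ) ≤ Int.fract (v' y : ℝ)))

/-- Diagonal region equivalence `ν ≅^d_M ν'`. -/
def DRegEquiv {X : Type} (M : ℕ) (v v' : ClockVal X) : Prop :=
  (∀ x : X,
    (((M : ℝ) < (v x : ℝ)) ↔ ((M : ℝ) < (v' x : ℝ))) ∧
    ((v x : ℝ) ≤ M → ⌊(v x : ℝ)⌋ = ⌊(v' x : ℝ)⌋) ∧
    ((v x : ℝ) ≤ M → (Int.fract (v x : ℝ) = 0 ↔ Int.fract (v' x : ℝ) = 0))) ∧
  (∀ x y : X, ∀ c : ℤ, -(M : ℤ) < c → c < (M : ℤ) →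
    ((v x : ℝ) - (v y : ℝ) ≤ (c : ℝ) ↔ (v' x : ℝ) - (v' y : ℝ) ≤ (c : ℝ)))

/-- `r` is an equivalence class of the relation `E`. -/
def EqClass {X : Type} (E : ClockVal X → ClockVal X → Prop) (r : Set (ClockVal X)) : Prop :=
  ∃ v, r = {v' | E v v'}

/-- Nodes of region/simulation/zone graphs: a state paired with a set of valuations. -/
abbrev RNode (Q X : Type) := Q × Set (ClockVal X)

/-- A transition `(q,r) →^t (q',r')` of the region graph built on the equivalence `E`. -/
def RGTrans {Q X : Type} (A : TBA Q X) (E : ClockVal X → ClockVal X → Prop)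
    (t : TBATrans Q X) (n n' : RNode Q X) : Prop :=
  EqClass E n.2 ∧ EqClass E n'.2 ∧
    ∃ v ∈ n.2, ∃ d : NNReal, ∃ v' ∈ n'.2, A.Step t d (n.1, v) (n'.1, v')

def PreStable {Q X : Type} (A : TBA Q X) (t : TBATrans Q X) (n n' : RNode Q X) : Prop :=
  ∀ v ∈ n.2, ∃ v' ∈ n'.2, ∃ d : NNReal, A.Step t d (n.1, v) (n'.1, v')

def PostStable {Q X : Type} (A : TBA Q X) (t : TBATrans Q X) (n n' : RNode Q X) : Prop :=
  ∀ v' ∈ n'.2, ∃ v ∈ n.2, ∃ d : NNReal, A.Step t d (n.1, v) (n'.1, v')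

/-- A progressive path: every clock is either eventually always above `M`,
or is both reset and strictly positive infinitely often. -/
def Progressive {Q X : Type} (M : ℕ) (nodes : ℕ → RNode Q X) : Prop :=
  ∀ x : X,
    (∃ n : ℕ, ∀ i > n, ∀ v ∈ (nodes i).2, (M : ℝ) < (v x : ℝ)) ∨
    (∀ n : ℕ, (∃ i > n, ∀ v ∈ (nodes i).2, v x = 0) ∧
              (∃ j > n, ∀ v ∈ (nodes j).2, 0 < v x))

/-! ## Zones and abstraction operators -/

inductive ZoneConstraint (X : Type) where
  | single (x : X) (cmp : CmpOp) (c : ℕ)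
  | diff (x y : X) (cmp : CmpOp) (c : ℕ)

def ZoneConstraint.sat {X : Type} : ZoneConstraint X → ClockVal X → Prop
  | .single x cmp c, v => CmpOp.sat cmp (v x : ℝ) (c : ℝ)
  | .diff x y cmp c, v => CmpOp.sat cmp ((v x : ℝ) - (v y : ℝ)) (c : ℝ)

/-- A zone: a set of valuations definable by a finite conjunction of constraints
`x # c` or `x − y # c`. -/
def IsZone {X : Type} (Z : Set (ClockVal X)) : Prop :=
  ∃ l : List (ZoneConstraint X), Z = {v | ∀ c ∈ l, ZoneConstraint.sat c v}

/-- `Closure_M(Z)`: smallest union of regions containing `Z`. -/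
def closureR {X : Type} (M : ℕ) (Z : Set (ClockVal X)) : Set (ClockVal X) :=
  {v' | ∃ v ∈ Z, RegEquiv M v v'}

/-- `Closure^d_M(Z)`: smallest union of d-regions containing `Z`. -/
def closureD {X : Type} (M : ℕ) (Z : Set (ClockVal X)) : Set (ClockVal X) :=
  {v' | ∃ v ∈ Z, DRegEquiv M v v'}

/-- `S` is a union of equivalence classes of `E`. -/
def UnionOfClasses {X : Type} (E : ClockVal X → ClockVal X → Prop)
    (S : Set (ClockVal X)) : Prop :=
  ∀ v ∈ S, ∀ v', E v v' → v' ∈ S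

/-- Convexity for sets of clock valuations. -/
def ConvexVal {X : Type} (S : Set (ClockVal X)) : Prop :=
  ∀ u ∈ S, ∀ w ∈ S, ∀ θ : NNReal, θ ≤ 1 →
    (fun x => θ * u x + (1 - θ) * w x) ∈ S

/-- `Approx_M(Z)`: smallest convex union of d-regions containing `Z`. -/
def approxZ {X : Type} (M : ℕ) (Z : Set (ClockVal X)) : Set (ClockVal X) :=
  ⋂₀ {S | Z ⊆ S ∧ ConvexVal S ∧ UnionOfClasses (DRegEquiv M) S}

/-! ## Simulation graphs and the zone graph -/

/-- `{ν' | ∃ ν ∈ S, δ ≥ 0, (q,ν) →^{δ,t} (q',ν')}`. -/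
def postSet {Q X : Type} (A : TBA Q X) (t : TBATrans Q X) (q : Q)
    (S : Set (ClockVal X)) (q' : Q) : Set (ClockVal X) :=
  {v' | ∃ v ∈ S, ∃ d : NNReal, A.Step t d (q, v) (q', v')}

/-- Transition of the simulation graph built with abstraction operator `op`. -/
def SGTrans {Q X : Type} (A : TBA Q X) (op : Set (ClockVal X) → Set (ClockVal X))
    (t : TBATrans Q X) (n n' : RNode Q X) : Prop :=
  (postSet A t n.1 n.2 n'.1).Nonempty ∧ n'.2 = op (postSet A t n.1 n.2 n'.1)

/-- Initial node `(q0, {ν0})` of the simulation/zone graphs. -/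
def ZGInit {Q X : Type} (A : TBA Q X) : RNode Q X := (A.q0, {zeroVal X})

/-- A step of the zone graph `ZG^a(A)` (simulation graph with `Approx_M`). -/
def ZGStep {Q X : Type} (A : TBA Q X) (M : ℕ) (n n' : RNode Q X) : Prop :=
  ∃ t, SGTrans A (approxZ M) t n n'

/-- Nodes of `ZG^a(A)` reachable from the initial node. -/
def ZGReach {Q X : Type} (A : TBA Q X) (M : ℕ) : Set (RNode Q X) :=
  {n | Relation.ReflTransGen (ZGStep A M) (ZGInit A) n}

/-! ## Bounded, lower-bounded, reset and zero-checked clocks -/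

/-- Clock `x` is bounded by transition `t` taken from the set of valuations `Z`. -/
def BoundsClock {Q X : Type} (t : TBATrans Q X) (Z : Set (ClockVal X)) (x : X) : Prop :=
  ∃ c : ℕ, ∀ v ∈ Z, ∀ d : NNReal, Guard.sat t.guard (ClockVal.add v d) →
    ((ClockVal.add v d) x : ℝ) ≤ c

/-- The guard of `t`, taken from `Z`, implies `x ≥ 1`. -/
def LowerBoundsClock {Q X : Type} (t : TBATrans Q X) (Z : Set (ClockVal X)) (x : X) : Prop :=
  ∀ v ∈ Z, ∀ d : NNReal, Guard.sat t.guard (ClockVal.add v d) →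
    (1 : ℝ) ≤ ((ClockVal.add v d) x : ℝ)

/-- Transition `t` taken from `Z` is a zero-check. -/
def ZeroCheck {Q X : Type} (t : TBATrans Q X) (Z : Set (ClockVal X)) : Prop :=
  ∃ x : X, ∀ v ∈ Z, ∀ d : NNReal, Guard.sat t.guard (ClockVal.add v d) →
    (ClockVal.add v d) x = 0

/-- A path of the zone graph is blocked if some clock is bounded infinitely often
but reset only finitely often. -/
def ZBlocked {Q X : Type} (nodes : ℕ → RNode Q X) (ts : ℕ → TBATrans Q X) : Prop :=
  ∃ x : X, {i | BoundsClock (ts i) (nodes i).2 x}.Infinite ∧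
           {i | x ∈ (ts i).reset}.Finite

/-! ## The guessing zone graph -/

/-- Nodes `(q, Z, Y)` of the guessing zone graph. -/
abbrev GNode (Q X : Type) := Q × Set (ClockVal X) × Set X

/-- Transitions of `GZG^a(A)`: `some t` is an action transition,
`none` is the auxiliary letter `τ`. -/
def GZGTrans {Q X : Type} (A : TBA Q X) (M : ℕ) :
    Option (TBATrans Q X) → GNode Q X → GNode Q X → Prop
  | some t, n, n' =>
      SGTrans A (approxZ M) t (n.1, n.2.1) (n'.1, n'.2.1) ∧
      n'.2.2 = n.2.2 ∪ t.reset ∧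
      ∃ v ∈ n.2.1, ∃ d : NNReal, ∃ v' ∈ n'.2.1,
        (∀ x, x ∉ n.2.2 → 0 < (ClockVal.add v d) x) ∧
        A.Step t d (n.1, v) (n'.1, v')
  | none, n, n' => n'.1 = n.1 ∧ n'.2.1 = n.2.1 ∧ (n'.2.2 = (∅ : Set X) ∨ n'.2.2 = n.2.2)

/-- Initial node `(q0, {ν0}, X)` of `GZG^a(A)`. -/
def GZGInit {Q X : Type} (A : TBA Q X) : GNode Q X := (A.q0, {zeroVal X}, Set.univ)

def GZGStep {Q X : Type} (A : TBA Q X) (M : ℕ) (n n' : GNode Q X) : Prop :=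
  ∃ l, GZGTrans A M l n n'

/-- Nodes of `GZG^a(A)` reachable from the initial node. -/
def GZGReach {Q X : Type} (A : TBA Q X) (M : ℕ) : Set (GNode Q X) :=
  {n | Relation.ReflTransGen (GZGStep A M) (GZGInit A) n}

/-- A path of the guessing zone graph is blocked if some clock is bounded by
infinitely many of its transitions but reset by only finitely many. -/
def GBlocked {Q X : Type} (nodes : ℕ → GNode Q X)
    (labels : ℕ → Option (TBATrans Q X)) : Prop :=
  ∃ x : X,
    {i | ∃ t, labels i = some t ∧ BoundsClock t (nodes i).2.1 x}.Infinite ∧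
    {i | ∃ t, labels i = some t ∧ x ∈ t.reset}.Finite

/-! ## Clock orders -/

/-- `Z` orders clocks. -/
def OrdersClocks {X : Type} (Z : Set (ClockVal X)) : Prop :=
  ∀ x y : X, (∀ v ∈ Z, v x ≤ v y) ∨ (∀ v ∈ Z, v y ≤ v x)

/-- `Y` respects the order given by `Z`: it is downward closed w.r.t. it. -/
def RespectsOrder {X : Type} (Z : Set (ClockVal X)) (Y : Set X) : Prop :=
  ∀ y ∈ Y, ∀ x : X, (∀ v ∈ Z, v x ≤ v y) → x ∈ Y

/-! ## Strongly connected components -/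

def StepWithin {N : Type} (Γ : Set N) (step : N → N → Prop) (a b : N) : Prop :=
  a ∈ Γ ∧ b ∈ Γ ∧ step a b

/-- `Γ` is an SCC of the graph with edge relation `step`: every node of `Γ` is
reachable from every other node of `Γ` within `Γ`. -/
def IsSCC {N : Type} (step : N → N → Prop) (Γ : Set N) : Prop :=
  Γ.Nonempty ∧ ∀ a ∈ Γ, ∀ b ∈ Γ, Relation.ReflTransGen (StepWithin Γ step) a b

/-- `U_Γ`: clocks bounded by some transition of the SCC `Γ` of `GZG^a(A)`. -/
def GZGBoundedClocks {Q X : Type} (A : TBA Q X) (M : ℕ) (Γ : Set (GNode Q X)) : Set X :=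
  {x | ∃ n ∈ Γ, ∃ n' ∈ Γ, ∃ t, GZGTrans A M (some t) n n' ∧ BoundsClock t n.2.1 x}

/-- `R_Γ`: clocks reset by some transition of the SCC `Γ` of `GZG^a(A)`. -/
def GZGResetClocks {Q X : Type} (A : TBA Q X) (M : ℕ) (Γ : Set (GNode Q X)) : Set X :=
  {x | ∃ n ∈ Γ, ∃ n' ∈ Γ, ∃ t, GZGTrans A M (some t) n n' ∧ x ∈ t.reset}

/-! ## The strongly non-Zeno construction -/

def liftConstraint {X : Type} (c : AtomicConstraint X) : AtomicConstraint (Option X) :=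
  ⟨some c.clock, c.cmp, c.bound⟩

def liftGuard {X : Type} (g : Guard X) : Guard (Option X) := g.map liftConstraint

/-- `SNZ(A)`: a fresh clock `z` (`none`) is added; every accepting state `a` is split
into an accepting copy `a1` (`Sum.inr a`) reachable only with `z ≥ 1` and resetting `z`,
and a non-accepting copy `a2` (`Sum.inl a`). -/
def SNZ {Q X : Type} (A : TBA Q X) : TBA (Q ⊕ Q) (Option X) where
  q0 := Sum.inl A.q0
  trans :=
    {t' | ∃ t ∈ A.trans,
        t' = ⟨Sum.inl t.src, liftGuard t.guard, some '' t.reset, Sum.inl t.dst⟩} ∪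
    {t' | ∃ t ∈ A.trans, t.dst ∈ A.acc ∧
        t' = ⟨Sum.inl t.src, ⟨none, CmpOp.ge, 1⟩ :: liftGuard t.guard,
              insert none (some '' t.reset), Sum.inr t.dst⟩} ∪
    {t' | ∃ a ∈ A.acc, t' = ⟨Sum.inr a, [], ∅, Sum.inl a⟩}
  acc := Sum.inr '' A.acc

/-! ## Trapped runs and the restricted guessing zone graph -/

/-- A run of `A` is trapped in the SCC `Γ` of `ZG^a(A)`: some suffix of the run
instantiates a path lying within `Γ`. -/
def TrappedIn {Q X : Type} (A : TBA Q X) (M : ℕ) (Γ : Set (RNode Q X))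
    (st : ℕ → Q × ClockVal X) (ts : ℕ → TBATrans Q X) : Prop :=
  ∃ m : ℕ, ∃ nodes : ℕ → RNode Q X,
    (∀ i, nodes i ∈ Γ) ∧
    (∀ i, SGTrans A (approxZ M) (ts (m + i)) (nodes i) (nodes (i + 1))) ∧
    (∀ i, (st (m + i)).1 = (nodes i).1 ∧ (st (m + i)).2 ∈ (nodes i).2)

/-- Steps of `GZG^a(A)` whose endpoints project into `Γ`. -/
def GZGRestStep {Q X : Type} (A : TBA Q X) (M : ℕ) (Γ : Set (RNode Q X))
    (g g' : GNode Q X) : Prop :=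
  (g.1, g.2.1) ∈ Γ ∧ (g'.1, g'.2.1) ∈ Γ ∧ GZGStep A M g g'

/-- Nodes of `GZG^a_{|Γ}(A)`: reachable from `(q^Γ, Z^Γ, X)` via steps projecting
into `Γ`. -/
def GZGRestNodes {Q X : Type} (A : TBA Q X) (M : ℕ) (Γ : Set (RNode Q X))
    (root : RNode Q X) : Set (GNode Q X) :=
  {g | Relation.ReflTransGen (GZGRestStep A M Γ) (root.1, root.2, Set.univ) g}

theorem RegEquiv.refl {X : Type} (M : ℕ) (v : ClockVal X) : RegEquiv M v v :=
  fun _ _ => ⟨Iff.rfl, fun _ => rfl, fun _ => Iff.rfl, fun _ _ => Iff.rfl⟩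

/-- The side conditions `v x ≤ M` only mention the first valuation; they transfer to the second
because a clock exceeds `M` in both valuations or in neither. -/
theorem RegEquiv.symm {X : Type} {M : ℕ} {v v' : ClockVal X} (h : RegEquiv M v v') :
    RegEquiv M v' v := by
  have hle : ∀ x, (v' x : ℝ) ≤ M → (v x : ℝ) ≤ M := fun x hx =>
    not_lt.mp fun hlt => not_lt.mpr hx ((h x x).1.mp hlt)
  intro x y
  obtain ⟨h₁, h₂, h₃, h₄⟩ := h x y
  exact ⟨h₁.symm, fun hx => (h₂ (hle x hx)).symm, fun hx => (h₃ (hle x hx)).symm,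
    fun hx hy => (h₄ (hle x hx) (hle y hy)).symm⟩

/-- transitions of the simulation graph `SG(A)` are post-stable
with respect to regions. -/
theorem sim_graph_post_stable_wrt_regions
    {Q X : Type} (A : TBA Q X) (M : ℕ) (hM : A.IsMaxConst M)
    (t : TBATrans Q X) (n n' : RNode Q X)
    (h : SGTrans A (closureR M) t n n')
    (hS : UnionOfClasses (RegEquiv M) n.2) (hS' : UnionOfClasses (RegEquiv M) n'.2)
    (r' : Set (ClockVal X)) (hr' : EqClass (RegEquiv M) r') (hsub : r' ⊆ n'.2) :
    ∃ r : Set (ClockVal X), EqClass (RegEquiv M) r ∧ r ⊆ n.2 ∧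
      RGTrans A (RegEquiv M) t (n.1, r) (n'.1, r') := by
  obtain ⟨w, rfl⟩ := hr'
  have hw : w ∈ n'.2 := hsub (RegEquiv.refl M w)
  rw [h.2] at hw
  obtain ⟨v₀, ⟨v, hv, d, hstep⟩, hv₀⟩ := hw
  exact ⟨{u | RegEquiv M v u}, ⟨v, rfl⟩, hS v hv, ⟨v, rfl⟩, ⟨w, rfl⟩,
    v, RegEquiv.refl M v, d, v₀, hv₀.symm, hstep⟩
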